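/- Let D : Fin (m+1) → ℕ satisfy D j ≥ 1 for all j, and let χ : Fin (Π_{j ≤ m} D j) → ℝ≥0∞ store a function f on digit tuples in lexicographic row order, i.e., χ(rank(v)) = f(v) for every digit tuple v. Then for every r < Π_{j < m} D j, min over d ∈ Fin (D m) of f(the extension of the rank-r tuple on the first m indices by last digit d) equals min_{0 ≤ ℓ < D m} χ(r · (D m) + ℓ). (Correctness of the GPU variable-elimination kernel, which replaces each block of D m consecutive cost entries by their minimum to eliminate the last variable.) -/

import Mathlib

open scoped ENNReal

/-! Appending a last digit `d` to a tuple of rank `r` is one Horner step: it produces the tuple of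
rank `r * D m + d`. The extensions of a fixed tuple therefore occupy one block of `D m` consecutive
cells, and the two infima range over the same family of values. -/

section MixedRadix

variable {n : ℕ}

/-- The lexicographic rank of the digit tuple `v` with respect to the radices `D`, most significant
digit first. Digits are plain naturals: the bounds `v j < D j`, under which this number is the
position of `v` in lexicographic order, are left to the type of the tuple being ranked. -/
def lexRank (D v : Fin n → ℕ) : ℕ :=
  ∑ j, v j * ∏ k with j < k, D k

theorem prod_filter_castSucc_lt {M : Type*} [CommMonoid M] (g : Fin (n + 1) → M) (j : Fin n) :
    ∏ k with j.castSucc < k, g k = (∏ k with j < k, g k.castSucc) * g (Fin.last n) := by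
  simp only [Finset.prod_filter, Fin.prod_univ_castSucc, Fin.castSucc_lt_castSucc_iff,
    Fin.castSucc_lt_last, if_true]

theorem prod_filter_last_lt {M : Type*} [CommMonoid M] (g : Fin (n + 1) → M) :
    ∏ k with Fin.last n < k, g k = 1 := by
  simp [Finset.filter_false_of_mem, Fin.le_last]

theorem lexRank_succ (D v : Fin (n + 1) → ℕ) :
    lexRank D v =
      lexRank (fun j => D j.castSucc) (fun j => v j.castSucc) * D (Fin.last n) +
        v (Fin.last n) := by
  simp only [lexRank, Fin.sum_univ_castSucc, prod_filter_castSucc_lt, prod_filter_last_lt,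
    Finset.sum_mul, mul_assoc, mul_one]

theorem lexRank_snoc (D : Fin (n + 1) → ℕ) (w : ∀ j : Fin n, Fin (D j.castSucc))
    (d : Fin (D (Fin.last n))) :
    lexRank D (fun j => (Fin.snoc w d : ∀ j, Fin (D j)) j) =
      lexRank (fun j => D j.castSucc) (fun j => w j) * D (Fin.last n) + d := by
  simp only [lexRank_succ, Fin.snoc_castSucc, Fin.snoc_last]

end MixedRadix

theorem gpu_eliminate_kernel_correct_general {α : Type*} [InfSet α] {m : ℕ} (D : Fin (m + 1) → ℕ)
    (f : (∀ j, Fin (D j)) → α) (χ : ℕ → α)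
    (hχ : ∀ v : ∀ j, Fin (D j), χ (lexRank D fun j => v j) = f v)
    (w : ∀ j : Fin m, Fin (D j.castSucc)) :
    ⨅ d : Fin (D (Fin.last m)), f (Fin.snoc w d) =
      ⨅ ℓ : Fin (D (Fin.last m)),
        χ (lexRank (fun j => D j.castSucc) (fun j => w j) * D (Fin.last m) + ℓ) :=
  iInf_congr fun d => by rw [← hχ, lexRank_snoc]

/-- **Correctness of the GPU variable-elimination kernel.**
Let `D : Fin (m+1) → ℕ` be radices with `D j ≥ 1`, and let the cost array
`χ` store a function `f` on digit tuples in lexicographic row order, i.e.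
`χ (rank v) = f v` for every digit tuple `v`.  Then for every `r < Π_{j < m} D j` and
the rank-`r` tuple `w` on the first `m` indices, the minimum over `d ∈ Fin (D m)` of
`f (extension of w by last digit d)` equals `min_{0 ≤ ℓ < D m} χ (r · (D m) + ℓ)`. -/
theorem gpu_eliminate_kernel_correct
    (m : ℕ) (D : Fin (m + 1) → ℕ) (hD : ∀ j, 1 ≤ D j)
    (f : (∀ j, Fin (D j)) → ℝ≥0∞) (χ : ℕ → ℝ≥0∞)
    (hχ : ∀ v : ∀ j, Fin (D j),
      χ (∑ j, (v j : ℕ) * ∏ k ∈ Finset.univ.filter (fun k => j < k), D k) = f v) :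
    ∀ r : ℕ, r < (∏ j : Fin m, D j.castSucc) →
      ∀ w : ∀ j : Fin m, Fin (D j.castSucc),
        (∑ j : Fin m, (w j : ℕ) *
            ∏ k ∈ Finset.univ.filter (fun k : Fin m => j < k), D k.castSucc) = r →
        (⨅ d : Fin (D (Fin.last m)), f (Fin.snoc w d))
          = ⨅ ℓ : Fin (D (Fin.last m)), χ (r * D (Fin.last m) + ℓ) := by
  rintro _ - w rfl
  exact gpu_eliminate_kernel_correct_general D f χ hχ w
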